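/- If G is a connected block graph, then mob(G) = ω(G), where ω(G) is the clique number of G. -/

import Mathlib

/-- `S` is a general position set of `G`: no three distinct vertices of `S`
lie on a common shortest path. -/
def IsGPSet {V : Type*} (G : SimpleGraph V) (S : Finset V) : Prop :=
  ∀ x ∈ S, ∀ y ∈ S, ∀ z ∈ S, x ≠ y → y ≠ z → x ≠ z →
    G.dist x y + G.dist y z ≠ G.dist x z

/-- A legal move: one robot moves from an occupied vertex `u` to an adjacent
unoccupied vertex `v` so that the new set of occupied vertices is again in
general position. -/
def LegalMove {V : Type*} [DecidableEq V] (G : SimpleGraph V) (S T : Finset V) : Prop :=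
  ∃ u ∈ S, ∃ v, v ∉ S ∧ G.Adj u v ∧ T = insert v (S.erase u) ∧ IsGPSet G T

/-- `S` is a mobile general position set of `G`: `S` is in general position and
there is a finite sequence of legal moves starting from `S` after which every
vertex of `G` has been occupied at some stage. -/
def IsMobileGPSet {V : Type*} [DecidableEq V] (G : SimpleGraph V) (S : Finset V) : Prop :=
  IsGPSet G S ∧ ∃ (m : ℕ) (f : ℕ → Finset V), f 0 = S ∧
    (∀ i < m, LegalMove G (f i) (f (i + 1))) ∧
    ∀ v : V, ∃ i ≤ m, v ∈ f i

/-- The mobile general position number of `G`. -/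
noncomputable def mob {V : Type*} [DecidableEq V] (G : SimpleGraph V) : ℕ :=
  sSup {n | ∃ S : Finset V, IsMobileGPSet G S ∧ S.card = n}

/-- The general position number of `G`. -/
noncomputable def gpNum {V : Type*} (G : SimpleGraph V) : ℕ :=
  sSup {n | ∃ S : Finset V, IsGPSet G S ∧ S.card = n}

/-- A set `B` of vertices induces a connected subgraph without cut-vertices. -/
def IsBlockCandidate {V : Type*} (G : SimpleGraph V) (B : Set V) : Prop :=
  (SimpleGraph.induce B G).Connected ∧
    ∀ x ∈ B, B \ {x} = ∅ ∨ (SimpleGraph.induce (B \ {x}) G).Connected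

/-- A block of `G`: a maximal set of vertices inducing a connected subgraph
without cut-vertices. -/
def IsBlock {V : Type*} (G : SimpleGraph V) (B : Set V) : Prop :=
  IsBlockCandidate G B ∧ ∀ B' : Set V, IsBlockCandidate G B' → B ⊆ B' → B' = B

/-- A block graph: a connected graph in which every block is a clique. -/
def IsBlockGraph {V : Type*} (G : SimpleGraph V) : Prop :=
  G.Connected ∧ ∀ B : Set V, IsBlock G B → G.IsClique B

/-!
In a block graph, two neighbours of `v` in the same component of `G - v` lie with `v` on a cycle,
hence in one block, so they are adjacent.

Upper bound: let `S` be a mobile general position set with at least three robots. When `v` is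
occupied, all other robots lie in one component of `G - v`; a legal move cannot destroy the property
that all but at most one robot lie in that component. So every `v` points to a component of `G - v`
containing all but at most one vertex of `S`. Choose `v` with the smallest such component `C`. Every
neighbour `u` of `v` in `C` then points back towards `v`, and `v` together with these neighbours
forms a clique `K`. Each vertex `x` is outside the component chosen at some `u ∈ K`: take `u = v` if
`x ∉ C`, and otherwise the neighbour of `v` on a geodesic to `x`. As each `u ∈ K` accounts for at
most one vertex of `S`, we get `|S| ≤ |K|`.

Lower bound: a maximal clique `K` has a unique vertex `b` closest to any given vertex `x`, and the
robot at `b` can walk along a geodesic to `x` while the others stay. Legal moves being reversible,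
the robots can return to `K` and serve every vertex in turn.
-/

open SimpleGraph

section BlockGraph

variable {V : Type*} {G : SimpleGraph V}

/-- `a` and `b` lie in the same component of `G - v`. Since `G - v` is encoded as `G` without the
edges at `v`, the vertex `v` is reachable from itself only. -/
abbrev ReachableAvoiding (G : SimpleGraph V) (v a b : V) : Prop :=
  (G.deleteIncidenceSet v).Reachable a b

section ReachableAvoiding

variable {u v a b x y : V}

lemma reachableAvoiding_of_adj (h : G.Adj a b) (ha : a ≠ v) (hb : b ≠ v) :
    ReachableAvoiding G v a b :=
  (deleteIncidenceSet_adj.2 ⟨h, ha, hb⟩).reachable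

lemma reachableAvoiding_of_notMem_support (p : G.Walk a b) (hv : v ∉ p.support) :
    ReachableAvoiding G v a b := by
  refine ⟨p.transfer _ fun e he => ?_⟩
  rw [edgeSet_deleteIncidenceSet]
  exact ⟨p.edges_subset_edgeSet he, fun h => hv (Walk.mem_support_of_mem_edges he h.2)⟩

lemma eq_of_reachableAvoiding_self (h : ReachableAvoiding G v v a) : a = v := by
  obtain ⟨p⟩ := h
  cases p with
  | nil => rfl
  | cons hadj _ => exact absurd rfl (deleteIncidenceSet_adj.1 hadj).2.1

lemma exists_isPath_of_reachableAvoiding (h : ReachableAvoiding G v a b) (ha : a ≠ v) :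
    ∃ p : G.Walk a b, p.IsPath ∧ v ∉ p.support := by
  classical
  obtain ⟨p, hp⟩ := h.exists_isPath
  refine ⟨p.mapLe (G.deleteIncidenceSet_le v), hp.mapLe _, fun hv => ha ?_⟩
  rw [Walk.support_mapLe_eq_support] at hv
  exact eq_of_reachableAvoiding_self (p.takeUntil v hv).reachable.symm

lemma reachableAvoiding_of_dist_le (hc : G.Connected) (hu : u ≠ v)
    (h : G.dist x u ≤ G.dist x v) : ReachableAvoiding G v x u := by
  classical
  obtain ⟨p, hp⟩ := hc.exists_walk_length_eq_dist x u
  refine reachableAvoiding_of_notMem_support p fun hv => ?_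
  have hlt := Walk.length_takeUntil_lt_length hv hu.symm
  have hle := dist_le (p.takeUntil v hv)
  lia

lemma dist_add_dist_of_not_reachableAvoiding (hc : G.Connected)
    (h : ¬ ReachableAvoiding G v x y) : G.dist x v + G.dist v y = G.dist x y := by
  obtain ⟨p, hp⟩ := hc.exists_walk_length_eq_dist x y
  have hv : v ∈ p.support := by_contra fun hv => h (reachableAvoiding_of_notMem_support p hv)
  obtain ⟨q, r, rfl⟩ := Walk.mem_support_iff_exists_append.1 hv
  rw [Walk.length_append] at hp
  have hq := dist_le q
  have hr := dist_le r
  have htri : G.dist x y ≤ G.dist x v + G.dist v y := hc.dist_triangle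
  lia

lemma exists_adj_dist_add_one_eq (hc : G.Connected) (h : x ≠ u) :
    ∃ w, G.Adj w u ∧ G.dist x w + 1 = G.dist x u := by
  obtain ⟨p, hp⟩ := hc.exists_walk_length_eq_dist u x
  cases p with
  | nil => exact absurd rfl h
  | @cons _ w _ hadj p =>
    refine ⟨w, hadj.symm, ?_⟩
    have hpw := dist_le p
    have htri : G.dist u x ≤ G.dist u w + G.dist w x := hc.dist_triangle
    rw [dist_eq_one_iff_adj.2 hadj] at htri
    rw [Walk.length_cons] at hp
    rw [dist_comm (u := x), dist_comm (u := x)]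
    lia

end ReachableAvoiding

section Blocks

lemma connected_induce_sUnion_of_isChain {c : Set (Set V)} (hc : IsChain (· ⊆ ·) c)
    (hne : c.Nonempty) (hconn : ∀ s ∈ c, (G.induce s).Connected) :
    (G.induce (⋃₀ c)).Connected := by
  have hnonempty : ∀ s ∈ c, s.Nonempty := fun s hs =>
    Set.nonempty_coe_sort.1 (hconn s hs).nonempty
  refine induce_sUnion_connected_of_pairwise_not_disjoint hne (fun {s t} hs ht => ?_)
    (fun {s} hs => hconn s hs)
  rcases hc.total hs ht with hst | hts
  · rw [Set.inter_eq_left.2 hst]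
    exact hnonempty s hs
  · rw [Set.inter_eq_right.2 hts]
    exact hnonempty t ht

lemma IsBlockCandidate.connected_induce_diff_singleton {B : Set V} (hB : IsBlockCandidate G B)
    {x : V} (hne : (B \ {x}).Nonempty) : (G.induce (B \ {x})).Connected := by
  by_cases hx : x ∈ B
  · exact (hB.2 x hx).resolve_left hne.ne_empty
  · rw [Set.sdiff_singleton_eq_self hx]
    exact hB.1

lemma IsBlockCandidate.sUnion_of_isChain {c : Set (Set V)} (hc : IsChain (· ⊆ ·) c)
    (hne : c.Nonempty) (hcand : ∀ B ∈ c, IsBlockCandidate G B) :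
    IsBlockCandidate G (⋃₀ c) := by
  refine ⟨connected_induce_sUnion_of_isChain hc hne fun B hB => (hcand B hB).1, fun x _ =>
    (Set.eq_empty_or_nonempty _).imp_right fun hdiff => ?_⟩
  have hunion : ⋃₀ c \ {x} = ⋃₀ {s ∈ (· \ {x}) '' c | s.Nonempty} := by
    ext a
    simp only [Set.mem_sdiff, Set.mem_sUnion, Set.mem_image]
    constructor
    · rintro ⟨⟨B, hB, ha⟩, hax⟩
      exact ⟨B \ {x}, ⟨⟨B, hB, rfl⟩, a, ha, hax⟩, ha, hax⟩
    · rintro ⟨_, ⟨⟨B, hB, rfl⟩, -⟩, ha, hax⟩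
      exact ⟨⟨B, hB, ha⟩, hax⟩
  rw [hunion] at hdiff ⊢
  have hne' := (Set.nonempty_sUnion.1 hdiff).imp fun _ h => h.1
  refine connected_induce_sUnion_of_isChain ?_ hne' ?_
  · exact (hc.image_of_map_rel _ _ _ fun _ _ h => Set.sdiff_subset_sdiff_left h).mono
      (Set.sep_subset _ _)
  · rintro _ ⟨⟨B, hB, rfl⟩, hs⟩
    exact (hcand B hB).connected_induce_diff_singleton hs

lemma IsBlockCandidate.exists_isBlock_superset {B : Set V} (hB : IsBlockCandidate G B) :
    ∃ B', IsBlock G B' ∧ B ⊆ B' := by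
  obtain ⟨B', hle, hmax⟩ := zorn_subset_nonempty {B | IsBlockCandidate G B}
    (fun c hcand hc hne =>
      ⟨⋃₀ c, .sUnion_of_isChain hc hne hcand, fun _ => Set.subset_sUnion_of_mem⟩) B hB
  exact ⟨B', ⟨hmax.prop, fun _ hcand hsub => (hmax.eq_of_subset hcand hsub).symm⟩, hle⟩

lemma IsBlockGraph.isClique_of_isBlockCandidate (hG : IsBlockGraph G) {B : Set V}
    (hB : IsBlockCandidate G B) : G.IsClique B := by
  obtain ⟨B', hB', hsub⟩ := hB.exists_isBlock_superset
  exact (hG.2 B' hB').subset hsub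

lemma setOf_mem_support_dropLast {u v : V} {p : G.Walk u v} (hp : p.IsPath) (hnil : ¬ p.Nil) :
    {a | a ∈ p.dropLast.support} = {a | a ∈ p.support} \ {v} := by
  have hnodup := hp.support_nodup
  rw [← Walk.support_dropLast_concat hnil] at hnodup ⊢
  ext a
  grind

lemma isBlockCandidate_support_of_isCycle {u : V} {c : G.Walk u u} (hc : c.IsCycle) :
    IsBlockCandidate G {a | a ∈ c.support} := by
  classical
  refine ⟨c.connected_induce_support, fun x hx => Or.inr ?_⟩
  have hrot := hc.rotate hx
  set d := c.rotate x hx with hd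
  have hsupport : {a | a ∈ c.support} = {a | a ∈ d.tail.support} := by
    ext a
    have := Walk.end_mem_support d.tail
    simp only [Set.mem_ofPred_eq, ← Walk.mem_support_rotate_iff c x hx, ← hd,
      Walk.mem_support_iff d, ← Walk.support_tail_of_not_nil _ hrot.not_nil]
    grind
  have hnil : ¬ d.tail.Nil := by
    have := hrot.three_le_length
    rw [← Walk.length_eq_zero_iff, Walk.length_tail]
    lia
  rw [hsupport, ← setOf_mem_support_dropLast hrot.isPath_tail hnil]
  exact d.tail.dropLast.connected_induce_support

lemma IsBlockGraph.adj_of_reachableAvoiding (hG : IsBlockGraph G) {v x y : V}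
    (hx : G.Adj v x) (hy : G.Adj v y) (hxy : x ≠ y) (h : ReachableAvoiding G v x y) :
    G.Adj x y := by
  obtain ⟨p, hp, hv⟩ := exists_isPath_of_reachableAvoiding h hx.ne'
  have hcycle : (Walk.cons hx (p.concat hy.symm)).IsCycle := by
    refine (Walk.cons_isCycle_iff _ _).2 ⟨hp.concat hv _, fun hmem => ?_⟩
    rw [Walk.edges_concat, List.concat_eq_append, List.mem_append] at hmem
    rcases hmem with hmem | hmem
    · exact hv (p.fst_mem_support_of_mem_edges hmem)
    · exact hxy (by grind)
  refine hG.isClique_of_isBlockCandidate (isBlockCandidate_support_of_isCycle hcycle) ?_ ?_ hxy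
  · simp
  · simp [Walk.support_concat]

lemma IsBlockGraph.not_reachableAvoiding_of_dist_add_eq (hG : IsBlockGraph G) {u v x : V}
    (huv : v ≠ u) (h : G.dist v u + G.dist u x = G.dist v x) : ¬ ReachableAvoiding G u v x := by
  intro hvx
  have hxu : x ≠ u := fun hxu => huv (eq_of_reachableAvoiding_self (hxu ▸ hvx.symm))
  obtain ⟨a, hau, hva⟩ := exists_adj_dist_add_one_eq hG.1 huv
  obtain ⟨b, hbu, hxb⟩ := exists_adj_dist_add_one_eq hG.1 hxu
  have hab : G.dist a b ≤ 1 := by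
    rcases eq_or_ne a b with rfl | hab
    · simp
    · have hlink : ReachableAvoiding G u a b :=
        (reachableAvoiding_of_dist_le hG.1 hau.ne (by lia)).symm.trans
          (hvx.trans (reachableAvoiding_of_dist_le hG.1 hbu.ne (by lia)))
      exact (dist_eq_one_iff_adj.2 (hG.adj_of_reachableAvoiding hau.symm hbu.symm hab hlink)).le
  have hvab : G.dist v b ≤ G.dist v a + G.dist a b := hG.1.dist_triangle
  have hvbx : G.dist v x ≤ G.dist v b + G.dist b x := hG.1.dist_triangle
  rw [dist_comm (u := b)] at hvbx
  rw [dist_comm (u := u)] at h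
  lia

end Blocks

section Orientation

variable {c : V → V}

lemma exists_forall_adj_reachableAvoiding [Finite V] (hG : G.Connected) (hc : ∀ v, c v ≠ v) :
    ∃ v, ∀ u, G.Adj v u → ReachableAvoiding G v (c v) u → ReachableAvoiding G u (c u) v := by
  have := hG.nonempty
  obtain ⟨v, hv⟩ := Finite.exists_min fun v => {x | ReachableAvoiding G v (c v) x}.ncard
  refine ⟨v, fun u hvu hu => by_contra fun hback => (hv u).not_gt (Set.ncard_lt_ncard ?_)⟩
  refine (Set.ssubset_iff_of_subset fun x hx => ?_).2
    ⟨u, hu, fun hcu => hc u (eq_of_reachableAvoiding_self hcu.symm)⟩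
  have hdist := dist_add_dist_of_not_reachableAvoiding hG fun hxv => hback (hx.trans hxv)
  exact hu.trans (reachableAvoiding_of_dist_le hG hvu.ne' (by lia)).symm

lemma IsBlockGraph.isClique_insert_setOf_adj (hG : IsBlockGraph G) (v a : V) :
    G.IsClique (insert v {u | G.Adj v u ∧ ReachableAvoiding G v a u}) :=
  isClique_insert.2 ⟨fun _ hx _ hy hxy =>
    hG.adj_of_reachableAvoiding hx.1 hy.1 hxy (hx.2.symm.trans hy.2), fun _ hu _ => hu.1⟩

lemma IsBlockGraph.exists_isClique_forall_exists_not_reachableAvoiding [Finite V]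
    (hG : IsBlockGraph G) (hc : ∀ v, c v ≠ v) :
    ∃ K : Set V, G.IsClique K ∧ ∀ x, ∃ u ∈ K, ¬ ReachableAvoiding G u (c u) x := by
  obtain ⟨v, hback⟩ := exists_forall_adj_reachableAvoiding hG.1 hc
  refine ⟨_, hG.isClique_insert_setOf_adj v (c v), fun x => ?_⟩
  by_cases hx : ReachableAvoiding G v (c v) x
  · have hxv : x ≠ v := fun hxv => hc v (eq_of_reachableAvoiding_self (hxv ▸ hx.symm))
    obtain ⟨u, huv, hdist⟩ := exists_adj_dist_add_one_eq hG.1 hxv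
    have hu : ReachableAvoiding G v (c v) u :=
      hx.trans (reachableAvoiding_of_dist_le hG.1 huv.ne (by lia))
    refine ⟨u, Or.inr ⟨huv.symm, hu⟩, fun hux => ?_⟩
    refine hG.not_reachableAvoiding_of_dist_add_eq huv.ne' ?_ ((hback u huv.symm hu).symm.trans hux)
    rw [dist_eq_one_iff_adj.2 huv.symm, dist_comm (u := u), dist_comm (u := v)]
    lia
  · exact ⟨v, Set.mem_insert _ _, hx⟩

end Orientation

section Configurations

variable [DecidableEq V] {S T : Finset V}

lemma LegalMove.isGPSet (h : LegalMove G S T) : IsGPSet G T := by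
  obtain ⟨_, _, _, _, _, _, hT⟩ := h
  exact hT

lemma LegalMove.symm (hS : IsGPSet G S) (h : LegalMove G S T) : LegalMove G T S := by
  obtain ⟨u, hu, v, hv, huv, rfl, _⟩ := h
  refine ⟨v, Finset.mem_insert_self _ _, u, by simp [huv.ne], huv.symm, ?_, hS⟩
  rw [Finset.erase_insert (fun h => hv (Finset.mem_of_mem_erase h)), Finset.insert_erase hu]

lemma LegalMove.card_eq (h : LegalMove G S T) : T.card = S.card := by
  obtain ⟨u, hu, v, hv, -, rfl, -⟩ := h
  rw [Finset.card_insert_of_notMem (fun h => hv (Finset.mem_of_mem_erase h)),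
    Finset.card_erase_add_one hu]

/-- The graph whose edges are the legal moves between general position sets of `G`. Requiring both
ends of an edge to be in general position makes the moves reversible. -/
def configurationGraph (G : SimpleGraph V) : SimpleGraph (Finset V) where
  Adj S T := IsGPSet G S ∧ LegalMove G S T
  symm := ⟨fun _ _ h => ⟨h.2.isGPSet, h.2.symm h.1⟩⟩
  loopless := ⟨fun _ ⟨_, _, _, _, hv, _, hS, _⟩ => hv (hS ▸ Finset.mem_insert_self _ _)⟩

lemma card_eq_of_reachable (h : (configurationGraph G).Reachable S T) :
    T.card = S.card := by
  obtain ⟨p⟩ := h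
  induction p with
  | nil => rfl
  | cons hadj _ ih => exact ih.trans hadj.2.card_eq

lemma IsMobileGPSet.exists_reachable (hS : IsMobileGPSet G S) (v : V) :
    ∃ T, (configurationGraph G).Reachable S T ∧ IsGPSet G T ∧ v ∈ T := by
  obtain ⟨hgp, m, f, rfl, hmove, hvisit⟩ := hS
  have hreach : ∀ i ≤ m, (configurationGraph G).Reachable (f 0) (f i) ∧ IsGPSet G (f i) := by
    intro i hi
    induction i with
    | zero => exact ⟨.refl _, hgp⟩
    | succ i ih =>
      obtain ⟨hr, hfi⟩ := ih (by lia)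
      have hmove_i := hmove i hi
      have hadj : (configurationGraph G).Adj (f i) (f (i + 1)) := ⟨hfi, hmove_i⟩
      exact ⟨hr.trans hadj.reachable, hmove_i.isGPSet⟩
  obtain ⟨i, hi, hv⟩ := hvisit v
  exact ⟨f i, (hreach i hi).1, (hreach i hi).2, hv⟩

lemma isMobileGPSet_of_forall_exists_reachable [Finite V] (hS : IsGPSet G S)
    (h : ∀ v, ∃ T, (configurationGraph G).Reachable S T ∧ v ∈ T) : IsMobileGPSet G S := by
  have htour : ∀ W : Finset V, ∃ p : (configurationGraph G).Walk S S,
      ∀ v ∈ W, ∃ T ∈ p.support, v ∈ T := by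
    intro W
    induction W using Finset.induction_on with
    | empty => exact ⟨.nil, by simp⟩
    | insert v W _ ih =>
      obtain ⟨p, hp⟩ := ih
      obtain ⟨T, ⟨q⟩, hvT⟩ := h v
      refine ⟨p.append (q.append q.reverse), fun w hw => ?_⟩
      simp only [Walk.mem_support_append_iff]
      rcases Finset.mem_insert.1 hw with rfl | hw
      · exact ⟨T, .inr (.inl q.end_mem_support), hvT⟩
      · obtain ⟨T', hT', hwT'⟩ := hp w hw
        exact ⟨T', .inl hT', hwT'⟩
  have := Fintype.ofFinite V
  obtain ⟨p, hp⟩ := htour Finset.univ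
  refine ⟨hS, p.length, p.getVert, p.getVert_zero, fun i hi => (p.adj_getVert_succ hi).2,
    fun v => ?_⟩
  obtain ⟨T, hT, hv⟩ := hp v (Finset.mem_univ v)
  obtain ⟨i, rfl, hi⟩ := Walk.mem_support_iff_exists_getVert.1 hT
  exact ⟨i, hi, hv⟩

end Configurations

section UpperBound

lemma IsGPSet.reachableAvoiding (hc : G.Connected) {S : Finset V} (hS : IsGPSet G S) {v a b : V}
    (hv : v ∈ S) (ha : a ∈ S) (hb : b ∈ S) (hav : a ≠ v) (hbv : b ≠ v) :
    ReachableAvoiding G v a b := by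
  by_contra hab
  exact hS a ha v hv b hb hav hbv.symm (fun h => hab (h ▸ .refl _))
    (dist_add_dist_of_not_reachableAvoiding hc hab)

/-- All vertices of `S` except possibly one lie in the component of `c` in `G - v`. For a general
position set this is preserved by legal moves, and it holds whenever `v` is occupied. -/
def AllButOneReachable (G : SimpleGraph V) (v c : V) (S : Finset V) : Prop :=
  ∃ a, ∀ x ∈ S, x ≠ a → ReachableAvoiding G v c x

variable {S T : Finset V} {v c : V}

lemma AllButOneReachable.of_legalMove [DecidableEq V] (hG : G.Connected) (hcv : c ≠ v)
    (hcard : 3 ≤ S.card) (hS : AllButOneReachable G v c S) (hmove : LegalMove G S T) :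
    AllButOneReachable G v c T := by
  obtain ⟨u, hu, w, hw, huw, rfl, hT⟩ := hmove
  obtain ⟨a, ha⟩ := hS
  rcases eq_or_ne u a with rfl | hua
  · exact ⟨w, fun x hx hxw => by grind⟩
  have hcu := ha u hu hua
  have huv : u ≠ v := fun huv => hcv (eq_of_reachableAvoiding_self (huv ▸ hcu.symm))
  rcases eq_or_ne w v with rfl | hwv
  · obtain ⟨d, hd, hdua⟩ : ∃ d ∈ S, d ∉ ({u, a} : Finset V) :=
      Finset.exists_mem_notMem_of_card_lt_card (Finset.card_le_two.trans_lt hcard)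
    have hdw : d ≠ w := fun h => hw (h ▸ hd)
    have hcd : ReachableAvoiding G w c d := ha d hd (by grind)
    exact ⟨w, fun x hx hxw => hcd.trans <|
      hT.reachableAvoiding hG (Finset.mem_insert_self _ _) (by grind) hx hdw hxw⟩
  · have hcw := hcu.trans (reachableAvoiding_of_adj huw huv hwv)
    exact ⟨a, fun x hx hxa => by grind⟩

lemma AllButOneReachable.of_reachable [DecidableEq V] (hG : G.Connected) (hcv : c ≠ v)
    (hcard : 3 ≤ S.card) (hS : AllButOneReachable G v c S)
    (h : (configurationGraph G).Reachable S T) : AllButOneReachable G v c T := by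
  obtain ⟨p⟩ := h
  induction p with
  | nil => exact hS
  | cons hadj _ ih => exact ih (hadj.2.card_eq ▸ hcard) (hS.of_legalMove hG hcv hcard hadj.2)

lemma IsGPSet.exists_allButOneReachable (hG : G.Connected) (hS : IsGPSet G S)
    (hcard : 1 < S.card) (hv : v ∈ S) : ∃ c ≠ v, AllButOneReachable G v c S := by
  obtain ⟨c, hc, hcv⟩ := Finset.exists_mem_ne hcard v
  exact ⟨c, hcv, v, fun x hx hxv => hS.reachableAvoiding hG hv hc hx hcv hxv⟩

lemma IsMobileGPSet.exists_allButOneReachable [DecidableEq V] (hG : G.Connected)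
    (hS : IsMobileGPSet G S) (hcard : 3 ≤ S.card) (v : V) :
    ∃ c ≠ v, AllButOneReachable G v c S := by
  obtain ⟨T, hST, hT, hv⟩ := hS.exists_reachable v
  have hcardT : 3 ≤ T.card := (card_eq_of_reachable hST).symm ▸ hcard
  obtain ⟨c, hcv, hc⟩ := hT.exists_allButOneReachable hG (by lia) hv
  exact ⟨c, hcv, hc.of_reachable hG hcv hcardT hST.symm⟩

lemma IsBlockGraph.card_le_cliqueNum_of_allButOneReachable [Finite V] (hG : IsBlockGraph G)
    (h : ∀ v, ∃ c ≠ v, AllButOneReachable G v c S) : S.card ≤ G.cliqueNum := by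
  choose c hcv exc hexc using h
  obtain ⟨K, hK, hcover⟩ := hG.exists_isClique_forall_exists_not_reachableAvoiding hcv
  choose g hgK hg using hcover
  have hexc_eq : ∀ x ∈ S, x = exc (g x) := fun x hx =>
    by_contra fun hne => hg x (hexc (g x) x hx hne)
  have hinj : Set.InjOn g S := fun x hx y hy hxy => by
    rw [hexc_eq x hx, hxy, ← hexc_eq y hy]
  calc S.card ≤ K.toFinite.toFinset.card :=
        Finset.card_le_card_of_injOn g (fun x _ => by simpa using hgK x) hinj
    _ ≤ G.cliqueNum := IsClique.card_le_cliqueNum (tc := by simpa using hK)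

lemma card_le_cliqueNum_of_card_le_two [Finite V] (hG : G.Connected) (hS : S.card ≤ 2) :
    S.card ≤ G.cliqueNum := by
  classical
  obtain ⟨v⟩ := hG.nonempty
  rcases le_or_gt S.card 1 with hone | htwo
  · exact hone.trans (IsClique.card_le_cliqueNum (t := {v}) (tc := by simp))
  · obtain ⟨x, -, y, -, hxy⟩ := Finset.one_lt_card.1 htwo
    have : Nontrivial V := ⟨x, y, hxy⟩
    obtain ⟨u, hvu⟩ := hG.preconnected.exists_adj_of_nontrivial v
    have hclique : G.IsClique (({v, u} : Finset V) : Set V) := by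
      rw [Finset.coe_pair, isClique_pair]
      exact fun _ => hvu
    calc S.card ≤ ({v, u} : Finset V).card := hS.trans_eq (Finset.card_pair hvu.ne).symm
      _ ≤ G.cliqueNum := hclique.card_le_cliqueNum

lemma IsMobileGPSet.card_le_cliqueNum [Finite V] [DecidableEq V] (hG : IsBlockGraph G)
    (hS : IsMobileGPSet G S) : S.card ≤ G.cliqueNum := by
  rcases le_or_gt S.card 2 with hle | hlt
  · exact card_le_cliqueNum_of_card_le_two hG.1 hle
  · exact hG.card_le_cliqueNum_of_allButOneReachable (hS.exists_allButOneReachable hG.1 hlt)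

end UpperBound

section LowerBound

variable {K : Finset V}

lemma isGPSet_of_isClique (hK : G.IsClique (K : Set V)) : IsGPSet G K := by
  intro a ha b hb e he hab hbe hae
  rw [dist_eq_one_iff_adj.2 (hK ha hb hab), dist_eq_one_iff_adj.2 (hK hb he hbe),
    dist_eq_one_iff_adj.2 (hK ha he hae)]
  decide

lemma nonempty_of_maximal_isClique [Nonempty V] (hK : Maximal G.IsClique (K : Set V)) :
    K.Nonempty := by
  obtain ⟨a⟩ := ‹Nonempty V›
  by_contra hempty
  rw [Finset.not_nonempty_iff_eq_empty] at hempty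
  subst hempty
  simpa using hK.le_of_ge (isClique_singleton a) (by simp)

lemma mem_of_maximal_isClique {s : Set V} (hs : Maximal G.IsClique s) {w : V}
    (hw : ∀ z ∈ s, w ≠ z → G.Adj w z) : w ∈ s :=
  hs.le_of_ge (isClique_insert.2 ⟨hs.prop, hw⟩) (Set.subset_insert _ _) (Set.mem_insert _ _)

lemma IsBlockGraph.adj_of_mem_isClique_of_reachableAvoiding (hG : IsBlockGraph G) {s : Set V}
    (hs : G.IsClique s) {b y z w : V} (hb : b ∈ s) (hy : y ∈ s) (hz : z ∈ s) (hyb : y ≠ b)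
    (hwb : G.Adj w b) (hwy : ReachableAvoiding G b w y) (hwz : w ≠ z) : G.Adj w z := by
  rcases eq_or_ne z b with rfl | hzb
  · exact hwb
  have hyz : ReachableAvoiding G b y z := by
    rcases eq_or_ne y z with rfl | hyz
    · exact .refl _
    · exact reachableAvoiding_of_adj (hs hy hz hyz) hyb hzb
  exact hG.adj_of_reachableAvoiding hwb.symm (hs hb hz hzb.symm) hwz (hwy.trans hyz)

lemma IsBlockGraph.exists_forall_dist_eq_dist_add_one (hG : IsBlockGraph G)
    (hK : Maximal G.IsClique (K : Set V)) (x : V) :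
    ∃ b ∈ K, ∀ y ∈ K, y ≠ b → G.dist y x = G.dist b x + 1 := by
  have := hG.1.nonempty
  simp only [SimpleGraph.dist_comm (v := x)]
  obtain ⟨b, hb, hmin⟩ := K.exists_min_image (G.dist x) (nonempty_of_maximal_isClique hK)
  refine ⟨b, hb, fun y hy hyb => ?_⟩
  have hby : G.Adj b y := hK.prop hb hy hyb.symm
  have htri : G.dist x y ≤ G.dist x b + G.dist b y := hG.1.dist_triangle
  rw [dist_eq_one_iff_adj.2 hby] at htri
  refine htri.antisymm (Nat.succ_le_of_lt (lt_of_not_ge fun hle => ?_))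
  have hxb : x ≠ b := by
    rintro rfl
    rw [SimpleGraph.dist_self, Nat.le_zero, hG.1.dist_eq_zero_iff] at hle
    exact hyb hle.symm
  -- Were `y` as close to `x` as `b`, the neighbour of `b` towards `x` would extend the clique `K`.
  obtain ⟨w, hwb, hxw⟩ := exists_adj_dist_add_one_eq hG.1 hxb
  have hwy : ReachableAvoiding G b w y :=
    (reachableAvoiding_of_dist_le hG.1 hwb.ne (by lia)).symm.trans
      (reachableAvoiding_of_dist_le hG.1 hyb hle)
  have hwK : w ∈ K := mem_of_maximal_isClique hK fun z hz =>
    hG.adj_of_mem_isClique_of_reachableAvoiding hK.prop hb hy hz hyb hwb hwy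
  have hbw := hmin w hwK
  lia

variable [DecidableEq V]

lemma isGPSet_insert_of_dist_eq (hK : G.IsClique (K : Set V)) {x : V} {d : ℕ}
    (hd : ∀ y ∈ K, G.dist y x = d) : IsGPSet G (insert x K) := by
  have hone : ∀ a ∈ K, ∀ b ∈ K, a ≠ b → G.dist a b = 1 := fun a ha b hb hab =>
    dist_eq_one_iff_adj.2 (hK ha hb hab)
  have hd' : ∀ y ∈ K, G.dist x y = d := fun y hy => dist_comm.trans (hd y hy)
  intro a ha b hb e he hab hbe hae
  grind

lemma reachable_insert_erase (hG : G.Connected) (hK : G.IsClique (K : Set V)) {b x : V}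
    (hb : b ∈ K) (hx : ∀ y ∈ K.erase b, G.dist y x = G.dist b x + 1) :
    (configurationGraph G).Reachable K (insert x (K.erase b)) := by
  have hK' : G.IsClique (K.erase b : Set V) := hK.subset (by simp)
  induction hk : G.dist b x generalizing x with
  | zero => rw [← hG.dist_eq_zero_iff.1 hk, Finset.insert_erase hb]
  | succ k ih =>
    have hbx : b ≠ x := fun h => by simp [h] at hk
    obtain ⟨w, hwx, hbw⟩ := exists_adj_dist_add_one_eq hG hbx
    have hw : ∀ y ∈ K.erase b, G.dist y w = G.dist b w + 1 := by
      intro y hy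
      have hyb : G.dist y b = 1 := dist_eq_one_iff_adj.2
        (hK (Finset.mem_of_mem_erase hy) hb (Finset.ne_of_mem_erase hy))
      have hle : G.dist y w ≤ G.dist y b + G.dist b w := hG.dist_triangle
      have hge : G.dist y x ≤ G.dist y w + G.dist w x := hG.dist_triangle
      rw [dist_eq_one_iff_adj.2 hwx, hx y hy] at hge
      lia
    have hwK : w ∉ K.erase b := fun h => by simpa using hw w h
    have hxK : x ∉ K.erase b := fun h => by simpa using hx x h
    have hadj : (configurationGraph G).Adj (insert w (K.erase b)) (insert x (K.erase b)) :=
      ⟨isGPSet_insert_of_dist_eq hK' hw, w, Finset.mem_insert_self _ _, x,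
        by simp [hwx.ne', hxK], hwx, by rw [Finset.erase_insert hwK],
        isGPSet_insert_of_dist_eq hK' hx⟩
    exact (ih hw (by lia)).trans hadj.reachable

lemma IsBlockGraph.isMobileGPSet_of_maximal_isClique [Finite V] (hG : IsBlockGraph G)
    (hK : Maximal G.IsClique (K : Set V)) : IsMobileGPSet G K := by
  refine isMobileGPSet_of_forall_exists_reachable (isGPSet_of_isClique hK.prop) fun x => ?_
  obtain ⟨b, hb, hgate⟩ := hG.exists_forall_dist_eq_dist_add_one hK x
  refine ⟨insert x (K.erase b), reachable_insert_erase hG.1 hK.prop hb fun y hy => ?_,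
    Finset.mem_insert_self _ _⟩
  exact hgate y (Finset.mem_of_mem_erase hy) (Finset.ne_of_mem_erase hy)

end LowerBound

end BlockGraph

/-- If `G` is a connected block graph, then `mob(G) = ω(G)`. -/
theorem stmt10 {V : Type*} [Fintype V] [DecidableEq V] (G : SimpleGraph V)
    (hG : IsBlockGraph G) : mob G = G.cliqueNum := by
  obtain ⟨K, hK⟩ := G.maximumClique_exists
  have hmobile := hG.isMobileGPSet_of_maximal_isClique (hK.isMaximalClique K)
  refine IsGreatest.csSup_eq ⟨⟨K, hmobile, maximumClique_card_eq_cliqueNum K hK⟩, ?_⟩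
  rintro _ ⟨S, hS, rfl⟩
  exact hS.card_le_cliqueNum hG
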